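/- Let k be a field and R′ = k[x,y] the polynomial ring in two variables over k. Then there exists a PProj-periodic R′-module that is not pure-projective; that is, there is an R′-module N admitting a (not necessarily pure) short exact sequence 0 → N → Q → N → 0 with Q a pure-projective R′-module, such that N is not a pure-projective R′-module. -/

import Mathlib

/-!
STATEMENT 19: Let k be a field and R′ = k[x,y]. Then there exists a
PProj-periodic R′-module that is not pure-projective: an R′-module N with a
(not necessarily pure) short exact sequence 0 → N → Q → N → 0, Q
pure-projective, such that N is not pure-projective.
-/

universe u

namespace Stmt19

/-- `g : B →ₗ[R] C` is a pure epimorphism if it is surjective and every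
homomorphism from a finitely presented module `T` to `C` lifts to `B`. -/
def IsPureEpi (R : Type u) [Ring R] {B C : Type u} [AddCommGroup B]
    [Module R B] [AddCommGroup C] [Module R C] (g : B →ₗ[R] C) : Prop :=
  Function.Surjective g ∧
    ∀ (T : Type u) [AddCommGroup T] [Module R T],
      Module.FinitePresentation R T →
        ∀ h : T →ₗ[R] C, ∃ l : T →ₗ[R] B, g ∘ₗ l = h

/-- A module `P` is pure-projective if `Hom(P, −)` sends pure epimorphisms to
surjections. -/
def IsPureProjective (R : Type u) [Ring R] (P : Type u) [AddCommGroup P]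
    [Module R P] : Prop :=
  ∀ (B C : Type u) [AddCommGroup B] [Module R B] [AddCommGroup C] [Module R C]
    (g : B →ₗ[R] C), IsPureEpi R g →
      ∀ h : P →ₗ[R] C, ∃ l : P →ₗ[R] B, g ∘ₗ l = h

/-- The polynomial ring `R′ = k[x,y]` in two variables. -/
abbrev Rp (k : Type u) [Field k] := MvPolynomial (Fin 2) k

section Helpers

open Finsupp

theorem IsPureProjective.prod {R : Type u} [Ring R] {P Q : Type u} [AddCommGroup P] [Module R P]
    [AddCommGroup Q] [Module R Q] (hP : IsPureProjective R P) (hQ : IsPureProjective R Q) :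
    IsPureProjective R (P × Q) := by
  intro B C _ _ _ _ g hg h
  obtain ⟨l₁, h₁⟩ := hP B C g hg (h ∘ₗ LinearMap.inl R P Q)
  obtain ⟨l₂, h₂⟩ := hQ B C g hg (h ∘ₗ LinearMap.inr R P Q)
  refine ⟨l₁.coprod l₂, ?_⟩
  apply LinearMap.prod_ext
  · rw [LinearMap.comp_assoc, LinearMap.coprod_inl, h₁]
  · rw [LinearMap.comp_assoc, LinearMap.coprod_inr, h₂]

theorem IsPureProjective.fst {R : Type u} [Ring R] {P Q : Type u} [AddCommGroup P] [Module R P]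
    [AddCommGroup Q] [Module R Q] (h : IsPureProjective R (P × Q)) : IsPureProjective R P := by
  intro B C _ _ _ _ g hg f
  obtain ⟨l, hl⟩ := h B C g hg (f ∘ₗ LinearMap.fst R P Q)
  refine ⟨l ∘ₗ LinearMap.inl R P Q, ?_⟩
  rw [← LinearMap.comp_assoc, hl, LinearMap.comp_assoc, LinearMap.fst_comp_inl, LinearMap.comp_id]

theorem isPureProjective_finsupp {R : Type u} [CommRing R] (B : Type u) [AddCommGroup B]
    [Module R B] (hB : Module.FinitePresentation R B) : IsPureProjective R (ℕ →₀ B) := by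
  intro X C _ _ _ _ g hg f
  choose l hl using fun n : ℕ => hg.2 B hB (f ∘ₗ lsingle n)
  refine ⟨Finsupp.lsum R l, ?_⟩
  ext n b
  simpa using LinearMap.congr_fun (hl n) b

/-- A criterion for the purity of an epimorphism. -/
theorem isPureEpi_of_tau {R : Type u} [CommRing R] [IsNoetherianRing R] {F M : Type u}
    [AddCommGroup F] [Module R F] [AddCommGroup M] [Module R M] (q : F →ₗ[R] M)
    (hq : Function.Surjective q) (τ : ℕ → F →ₗ[R] F) (h1 : ∀ n, q ∘ₗ τ n = q)
    (h2 : ∀ f, q f = 0 → ∃ N, ∀ n ≥ N, τ n f = 0) : IsPureEpi R q := by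
  refine ⟨hq, ?_⟩
  intro T _ _ hT h
  obtain ⟨m, p, hp⟩ := Module.Finite.exists_fin' R T
  obtain ⟨u, hu⟩ := Module.projective_lifting_property q (h ∘ₗ p) hq
  obtain ⟨S, hS⟩ : (LinearMap.ker p).FG := IsNoetherian.noetherian _
  have hS0 : ∀ s ∈ S, p s = 0 := fun s hs => by
    have : s ∈ LinearMap.ker p := hS ▸ Submodule.subset_span hs
    simpa using this
  have key : ∀ s : Fin m → R, ∃ N, s ∈ S → ∀ n ≥ N, τ n (u s) = 0 := fun s => by
    by_cases hs : s ∈ S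
    · obtain ⟨N, hN⟩ := h2 (u s) (by
        have := LinearMap.congr_fun hu s
        simp only [LinearMap.comp_apply] at this
        rw [this, hS0 s hs, map_zero])
      exact ⟨N, fun _ => hN⟩
    · exact ⟨0, fun h => absurd h hs⟩
  choose N hN using key
  have hker : LinearMap.ker p ≤ LinearMap.ker (τ (S.sup N) ∘ₗ u) := by
    rw [← hS, Submodule.span_le]
    intro s hs
    exact hN s hs _ (Finset.le_sup (f := N) hs)
  let e := p.quotKerEquivOfSurjective hp
  refine ⟨(LinearMap.ker p).liftQ (τ (S.sup N) ∘ₗ u) hker ∘ₗ e.symm.toLinearMap, ?_⟩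
  ext t
  obtain ⟨v, rfl⟩ := hp t
  have he : e.symm (p v) = Submodule.Quotient.mk v := by
    rw [LinearEquiv.symm_apply_eq]; rfl
  simp only [LinearMap.comp_apply, LinearEquiv.coe_coe, he, Submodule.liftQ_apply]
  have a := LinearMap.congr_fun (h1 (S.sup N)) (u v)
  have b := LinearMap.congr_fun hu v
  simp only [LinearMap.comp_apply] at a b
  rw [a, b]

variable {R : Type u} [CommRing R] (x : R) (B : Type u) [AddCommGroup B] [Module R B]

/-- The endomorphism `e_n ↦ e_n - x e_{n+1}`. -/
noncomputable def dd : (ℕ →₀ B) →ₗ[R] (ℕ →₀ B) :=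
  Finsupp.lsum R (fun n => lsingle n - x • lsingle (n + 1))

theorem dd_single (n : ℕ) (b : B) : dd x B (single n b) = single n b - single (n + 1) (x • b) := by
  simp [dd]

/-- The endomorphism `e_i ↦ x^(n-i) e_n` for `i ≤ n`, identity on the others. -/
noncomputable def tau (n : ℕ) : (ℕ →₀ B) →ₗ[R] (ℕ →₀ B) :=
  Finsupp.lsum R (fun i => if i ≤ n then x ^ (n - i) • lsingle n else lsingle i)

theorem tau_single (n i : ℕ) (b : B) : tau x B n (single i b) =
    if i ≤ n then single n (x ^ (n - i) • b) else single i b := by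
  simp only [tau, Finsupp.lsum_single]
  split_ifs <;> simp

theorem tau_dd (n i : ℕ) (hi : i < n) (b : B) : tau x B n (dd x B (single i b)) = 0 := by
  rw [dd_single, map_sub, tau_single, tau_single, if_pos hi.le, if_pos (by omega), smul_smul,
    ← pow_succ, show n - (i + 1) + 1 = n - i by omega, sub_self]

theorem mkQ_step (n : ℕ) (b : B) : (LinearMap.range (dd x B)).mkQ (single (n + 1) (x • b)) =
    (LinearMap.range (dd x B)).mkQ (single n b) := by
  symm
  rw [← sub_eq_zero, ← map_sub, ← dd_single]
  simp

theorem mkQ_pow (j n : ℕ) (b : B) : (LinearMap.range (dd x B)).mkQ (single (n + j) (x ^ j • b)) =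
    (LinearMap.range (dd x B)).mkQ (single n b) := by
  induction j with
  | zero => simp
  | succ j ih => rw [pow_succ', mul_smul, ← add_assoc, mkQ_step, ih]

theorem isPureEpi_mkQ [IsNoetherianRing R] : IsPureEpi R (LinearMap.range (dd x B)).mkQ := by
  refine isPureEpi_of_tau _ (Submodule.mkQ_surjective _) (tau x B) ?_ ?_
  · intro n
    refine Finsupp.lhom_ext fun i b => ?_
    rw [LinearMap.comp_apply, tau_single]
    split_ifs with h
    · obtain ⟨j, rfl⟩ := Nat.exists_eq_add_of_le h
      rw [Nat.add_sub_cancel_left, mkQ_pow]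
    · rfl
  · intro f hf
    rw [Submodule.mkQ_apply, Submodule.Quotient.mk_eq_zero] at hf
    obtain ⟨g, rfl⟩ := hf
    induction g using Finsupp.induction_linear with
    | zero => exact ⟨0, by simp⟩
    | add g₁ g₂ h₁ h₂ =>
      obtain ⟨N₁, h₁⟩ := h₁
      obtain ⟨N₂, h₂⟩ := h₂
      refine ⟨max N₁ N₂, fun n hn => ?_⟩
      rw [map_add, map_add, h₁ n (le_trans (le_max_left _ _) hn),
        h₂ n (le_trans (le_max_right _ _) hn), add_zero]
    | single i b => exact ⟨i + 1, fun n hn => tau_dd x B n i hn b⟩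

theorem dd_natural {B' : Type u} [AddCommGroup B'] [Module R B'] (φ : B →ₗ[R] B') (c : ℕ →₀ B) :
    dd x B' (mapRange.linearMap φ c) = mapRange.linearMap φ (dd x B c) := by
  induction c using Finsupp.induction_linear with
  | zero => simp
  | add g₁ g₂ h₁ h₂ => simp only [map_add, h₁, h₂]
  | single i b =>
    have h : ∀ (n : ℕ) (b : B), mapRange.linearMap φ (single n b) = single n (φ b) :=
      fun n b => by simp
    rw [dd_single, map_sub, h, h, dd_single, map_smul]

/-- The general construction. -/
theorem construction {R : Type u} [CommRing R] {C F : Type u} [AddCommGroup C]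
    [Module R C] [AddCommGroup F] [Module R F] (i : F →ₗ[R] C) (π : C →ₗ[R] F)
    (hi : Function.Injective i) (hπ : Function.Surjective π) (hex : Function.Exact i π)
    (dC : C →ₗ[R] C) (d : F →ₗ[R] F) (hdi : ∀ f, dC (i f) = i (d f))
    (hdπ : ∀ c, π (dC c) = d (π c))
    (hC : IsPureProjective R C) (hF : IsPureProjective R F)
    (y : R) (hyF : ∀ f : F, y • f = 0) (hyC : ∀ c : C, i (π c) = y • c)
    (hpure : IsPureEpi R (LinearMap.range d).mkQ)
    (hno : ¬ ∃ l : F →ₗ[R] F, l ∘ₗ d = 0 ∧ ∀ f, l f - f ∈ LinearMap.range d) :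
    ∃ (N : Type u) (_ : AddCommGroup N) (_ : Module R N)
      (Q : Type u) (_ : AddCommGroup Q) (_ : Module R Q)
      (_ : IsPureProjective R Q)
      (f : N →ₗ[R] Q) (g : Q →ₗ[R] N),
      Function.Injective f ∧ Function.Surjective g ∧
      LinearMap.range f = LinearMap.ker g ∧
      ¬ IsPureProjective R N := by
  let j : F →ₗ[R] C × F := i.prod (-d)
  let K := LinearMap.range j
  let α₀ : C × F →ₗ[R] C × F := (dC.coprod i).prod (π ∘ₗ LinearMap.fst R C F)
  have hα₀ : ∀ c f, α₀ (c, f) = (dC c + i f, π c) := fun c f => rfl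
  have hj : ∀ f, j f = (i f, - d f) := fun f => rfl
  have hjinj : Function.Injective j := fun a b h => hi (congrArg Prod.fst h)
  have hK : LinearMap.ker α₀ = K := by
    ext ⟨c, f⟩
    rw [LinearMap.mem_ker, hα₀, Prod.mk_eq_zero]
    constructor
    · rintro ⟨h1, h2⟩
      obtain ⟨g, rfl⟩ := (hex c).1 h2
      refine ⟨g, ?_⟩
      rw [hj]
      rw [hdi, ← map_add] at h1
      have := hi (h1.trans (map_zero i).symm)
      rw [eq_neg_of_add_eq_zero_left this, neg_neg]
    · rintro ⟨g, hg⟩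
      rw [hj, Prod.mk.injEq] at hg
      obtain ⟨rfl, rfl⟩ := hg
      refine ⟨?_, (hex _).2 ⟨g, rfl⟩⟩
      rw [hdi, map_neg, add_neg_cancel]
  let α : ((C × F) ⧸ K) →ₗ[R] C × F := K.liftQ α₀ hK.ge
  have hα : ∀ z, α (K.mkQ z) = α₀ z := fun z => rfl
  have hαinj : Function.Injective α := by
    rw [← LinearMap.ker_eq_bot]
    exact Submodule.ker_liftQ_eq_bot _ _ _ hK.le
  let β : C × F →ₗ[R] F := π.coprod (-d)
  have hβ : ∀ a b, β (a, b) = π a - d b := fun a b => by simp [β, sub_eq_add_neg]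
  have hβs : Function.Surjective β := fun f => by
    obtain ⟨c, rfl⟩ := hπ f
    exact ⟨(c, 0), by simp [hβ]⟩
  have hαβ : ∀ w, β w = 0 ↔ ∃ z, α z = w := by
    rintro ⟨a, b⟩
    rw [hβ]
    constructor
    · intro h
      obtain ⟨c, rfl⟩ := hπ b
      have : π (a - dC c) = 0 := by rw [map_sub, hdπ, h]
      obtain ⟨f, hf⟩ := (hex _).1 this
      refine ⟨K.mkQ (c, f), ?_⟩
      rw [hα, hα₀, hf, add_sub_cancel]
    · rintro ⟨z, hz⟩
      obtain ⟨⟨c, f⟩, rfl⟩ := K.mkQ_surjective z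
      rw [hα, hα₀, Prod.mk.injEq] at hz
      obtain ⟨rfl, rfl⟩ := hz
      rw [map_add, hdπ, (hex _).2 ⟨f, rfl⟩, add_zero, sub_self]
  refine ⟨((C × F) ⧸ K) × F, inferInstance, inferInstance, (C × F) × (C × F), inferInstance,
    inferInstance, (hC.prod hF).prod (hC.prod hF), α.prodMap j,
    (K.mkQ ∘ₗ LinearMap.snd R (C × F) (C × F)).prod (β ∘ₗ LinearMap.fst R (C × F) (C × F)),
    ?_, ?_, ?_, ?_⟩
  · exact Function.Injective.prodMap hαinj hjinj
  · rintro ⟨z, f⟩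
    obtain ⟨v, rfl⟩ := K.mkQ_surjective z
    obtain ⟨w, rfl⟩ := hβs f
    exact ⟨(w, v), rfl⟩
  · ext ⟨w, v⟩
    rw [LinearMap.mem_ker]
    change _ ↔ (K.mkQ v, β w) = 0
    rw [Prod.mk_eq_zero, hαβ, Submodule.mkQ_apply, Submodule.Quotient.mk_eq_zero]
    constructor
    · rintro ⟨⟨z, f⟩, h⟩
      have h' : (α z, j f) = (w, v) := h
      rw [Prod.mk.injEq] at h'
      exact ⟨⟨f, h'.2⟩, ⟨z, h'.1⟩⟩
    · rintro ⟨⟨f, hf⟩, ⟨z, hz⟩⟩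
      refine ⟨(z, f), ?_⟩
      change (α z, j f) = (w, v)
      rw [hf, hz]
  · intro hN
    have hZ := hN.fst
    let h : ((C × F) ⧸ K) →ₗ[R] F ⧸ LinearMap.range d :=
      K.liftQ ((LinearMap.range d).mkQ ∘ₗ LinearMap.snd R C F) (by
        rintro _ ⟨g, rfl⟩
        rw [LinearMap.mem_ker, hj]
        simp)
    obtain ⟨l, hl⟩ := hZ _ _ _ hpure h
    refine hno ⟨l ∘ₗ K.mkQ ∘ₗ LinearMap.inr R C F, ?_, ?_⟩
    · ext g
      obtain ⟨c, rfl⟩ := hπ g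
      change l (K.mkQ (0, d (π c))) = 0
      have : K.mkQ (0, d (π c)) = y • K.mkQ (c, 0) := by
        rw [← map_smul, ← sub_eq_zero, ← map_sub, Submodule.mkQ_apply,
          Submodule.Quotient.mk_eq_zero]
        refine ⟨- π c, ?_⟩
        rw [hj, map_neg, hyC]
        simp
      rw [this, map_smul, hyF]
    · intro f
      have := LinearMap.congr_fun hl (K.mkQ (0, f))
      have h2 : (LinearMap.range d).mkQ (l (K.mkQ (0, f))) = (LinearMap.range d).mkQ f := this
      rw [← sub_eq_zero, ← map_sub, Submodule.mkQ_apply, Submodule.Quotient.mk_eq_zero] at h2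
      exact h2

theorem no_section {R : Type u} [CommRing R] (x : R) (B : Type u) [AddCommGroup B] [Module R B]
    {k : Type u} [Field k] (σ : B →+ Polynomial k) (hσ : ∀ b, σ (x • b) = Polynomial.X * σ b)
    (b₀ : B) (hb₀ : σ b₀ = 1) :
    ¬ ∃ l : (ℕ →₀ B) →ₗ[R] (ℕ →₀ B), l ∘ₗ dd x B = 0 ∧
      ∀ f, l f - f ∈ LinearMap.range (dd x B) := by
  rintro ⟨l, h1, h2⟩
  have hs : ∀ n b, l (single n b) = x • l (single (n + 1) b) := fun n b => by
    have := LinearMap.congr_fun h1 (single n b)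
    rw [LinearMap.comp_apply, dd_single, map_sub, LinearMap.zero_apply, sub_eq_zero] at this
    rw [this, ← smul_single, map_smul]
  have hp : ∀ n b, l (single 0 b) = x ^ n • l (single n b) := fun n b => by
    induction n with
    | zero => simp
    | succ n ih => rw [ih, hs, smul_smul, pow_succ]
  have hσp : ∀ n b, σ (x ^ n • b) = Polynomial.X ^ n * σ b := fun n b => by
    induction n with
    | zero => simp
    | succ n ih => rw [pow_succ', mul_smul, hσ, ih, pow_succ', mul_assoc]
  have hz : ∀ i, σ (l (single 0 b₀) i) = 0 := fun i => by
    by_contra hne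
    have hd : Polynomial.X ^ ((σ (l (single 0 b₀) i)).natDegree + 1) ∣ σ (l (single 0 b₀) i) := by
      conv_rhs => rw [hp ((σ (l (single 0 b₀) i)).natDegree + 1), Finsupp.smul_apply, hσp]
      exact Dvd.intro _ rfl
    have := Polynomial.natDegree_le_of_dvd hd hne
    rw [Polynomial.natDegree_X_pow] at this
    omega
  let φ : (ℕ →₀ B) →+ k := Finsupp.liftAddHom
    (fun _ => (Polynomial.evalRingHom (1 : k)).toAddMonoidHom.comp σ)
  have hφs : ∀ n b, φ (single n b) = (σ b).eval 1 := fun n b => by simp [φ]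
  have hφd : ∀ g, φ (dd x B g) = 0 := fun g => by
    induction g using Finsupp.induction_linear with
    | zero => simp
    | add g₁ g₂ h₁ h₂ => simp only [map_add, h₁, h₂, add_zero]
    | single i b => rw [dd_single, map_sub, hφs, hφs, hσ]; simp
  have hφl : φ (l (single 0 b₀)) = 0 := by
    simp only [φ, Finsupp.liftAddHom_apply, Finsupp.sum]
    refine Finset.sum_eq_zero fun i _ => ?_
    simp [hz]
  obtain ⟨g, hg⟩ := h2 (single 0 b₀)
  have := hφd g
  rw [hg, map_sub, hφl, hφs, hb₀] at this
  simp at this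

end Helpers

/-- There is a `PProj`-periodic `R′`-module which is not pure-projective. -/
theorem exists_pprojPeriodic_not_pureProjective (k : Type u) [Field k] :
    ∃ (N : Type u) (_ : AddCommGroup N) (_ : Module (Rp k) N)
      (Q : Type u) (_ : AddCommGroup Q) (_ : Module (Rp k) Q)
      (_ : IsPureProjective (Rp k) Q)
      (f : N →ₗ[Rp k] Q) (g : Q →ₗ[Rp k] N),
      Function.Injective f ∧ Function.Surjective g ∧
      LinearMap.range f = LinearMap.ker g ∧
      ¬ IsPureProjective (Rp k) N := by
  let y : Rp k := MvPolynomial.X 1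
  let x : Rp k := MvPolynomial.X 0
  let I : Ideal (Rp k) := Ideal.span {y}
  let J : Ideal (Rp k) := Ideal.span {y ^ 2}
  have hy0 : y ≠ 0 := MvPolynomial.X_ne_zero 1
  have hI : ∀ p, p ∈ I ↔ y ∣ p := fun p => Ideal.mem_span_singleton
  have hJ : ∀ p, p ∈ J ↔ y ^ 2 ∣ p := fun p => Ideal.mem_span_singleton
  have hJI : J ≤ I := fun p hp => (hI p).2 (dvd_trans (Dvd.intro _ (sq y).symm) ((hJ p).1 hp))
  let π₀ : (Rp k ⧸ J) →ₗ[Rp k] (Rp k ⧸ I) := Submodule.factor hJI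
  have hπm : ∀ p, π₀ (J.mkQ p) = I.mkQ p := fun p => rfl
  let i₀ : (Rp k ⧸ I) →ₗ[Rp k] (Rp k ⧸ J) := Submodule.liftQ I (y • J.mkQ) (by
    intro p hp
    obtain ⟨r, rfl⟩ := (hI p).1 hp
    rw [LinearMap.mem_ker, LinearMap.smul_apply, ← map_smul, Submodule.mkQ_apply,
      Submodule.Quotient.mk_eq_zero, hJ]
    exact ⟨r, by rw [smul_eq_mul]; ring⟩)
  have him : ∀ p, i₀ (I.mkQ p) = J.mkQ (y * p) := fun p => rfl
  have hI0 : ∀ p, I.mkQ p = 0 ↔ y ∣ p := fun p => by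
    rw [Submodule.mkQ_apply, Submodule.Quotient.mk_eq_zero, hI]
  have hJ0 : ∀ p, J.mkQ p = 0 ↔ y ^ 2 ∣ p := fun p => by
    rw [Submodule.mkQ_apply, Submodule.Quotient.mk_eq_zero, hJ]
  have hi₀ : Function.Injective i₀ := by
    rw [injective_iff_map_eq_zero]
    intro b hb
    obtain ⟨p, rfl⟩ := I.mkQ_surjective b
    rw [him, hJ0, sq] at hb
    rw [hI0]
    exact (mul_dvd_mul_iff_left hy0).1 hb
  have hπ₀ : Function.Surjective π₀ := fun b => by
    obtain ⟨p, rfl⟩ := I.mkQ_surjective b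
    exact ⟨J.mkQ p, rfl⟩
  have hπi : ∀ b, π₀ (i₀ b) = 0 := fun b => by
    obtain ⟨p, rfl⟩ := I.mkQ_surjective b
    rw [him, hπm, hI0]
    exact Dvd.intro _ rfl
  have hex₀ : ∀ c, π₀ c = 0 → ∃ b, i₀ b = c := fun c hc => by
    obtain ⟨p, rfl⟩ := J.mkQ_surjective c
    rw [hπm, hI0] at hc
    obtain ⟨r, rfl⟩ := hc
    exact ⟨I.mkQ r, rfl⟩
  have hyI : ∀ b : Rp k ⧸ I, y • b = 0 := fun b => by
    obtain ⟨p, rfl⟩ := I.mkQ_surjective b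
    rw [← map_smul, hI0]
    exact Dvd.intro _ rfl
  have hyJ : ∀ c : Rp k ⧸ J, i₀ (π₀ c) = y • c := fun c => by
    obtain ⟨p, rfl⟩ := J.mkQ_surjective c
    rfl
  let σ₀ : Rp k →+* Polynomial k := (MvPolynomial.aeval (R := k) ![Polynomial.X, 0]).toRingHom
  have hσy : σ₀ y = 0 := by simp [σ₀, y]
  have hσx : σ₀ x = Polynomial.X := by simp [σ₀, x]
  let σ : (Rp k ⧸ I) →+* Polynomial k := Ideal.Quotient.lift I σ₀ (by
    intro p hp
    obtain ⟨r, rfl⟩ := (hI p).1 hp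
    rw [map_mul, hσy, zero_mul])
  have hσm : ∀ p, σ (I.mkQ p) = σ₀ p := fun p => rfl
  refine construction (R := Rp k) (Finsupp.mapRange.linearMap (α := ℕ) i₀)
    (Finsupp.mapRange.linearMap (α := ℕ) π₀)
    ?_ ?_ ?_ (dd x _) (dd x _) (fun f => dd_natural x _ i₀ f)
    (fun c => (dd_natural x _ π₀ c).symm)
    (isPureProjective_finsupp _ (Module.finitePresentation_of_finite _ _))
    (isPureProjective_finsupp _ (Module.finitePresentation_of_finite _ _)) y ?_ ?_
    (isPureEpi_mkQ x _) (no_section x _ σ.toAddMonoidHom ?_ (I.mkQ 1) ?_)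
  · exact Finsupp.mapRange_injective _ (map_zero i₀) hi₀
  · exact Finsupp.mapRange_surjective _ (map_zero π₀) hπ₀
  · intro c
    constructor
    · intro h
      have h' : ∀ n, ∃ b, i₀ b = c n := fun n => hex₀ _ (by
        simpa using DFunLike.congr_fun h n)
      choose b hb using h'
      refine ⟨Finsupp.onFinset c.support b ?_, ?_⟩
      · intro n hn
        rw [Finsupp.mem_support_iff, ← hb n]
        exact fun h0 => hn (hi₀ (h0.trans (map_zero i₀).symm))
      · ext1 n
        simp [hb]
    · rintro ⟨f, rfl⟩
      ext1 n
      simp [hπi]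
  · intro f
    ext1 n
    simp [hyI]
  · intro c
    ext1 n
    simp [hyJ]
  · intro b
    obtain ⟨p, rfl⟩ := I.mkQ_surjective b
    change σ (I.mkQ (x * p)) = Polynomial.X * σ (I.mkQ p)
    rw [hσm, hσm, map_mul, hσx]
  · change σ (I.mkQ 1) = 1
    rw [hσm, map_one]

end Stmt19
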